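/- For z, y ∈ k^×, the formulas defining L̃_6(z,y) satisfy the defining relations of H_k, so they endow the 6-dimensional k-vector space with an H_k-module structure, and the H_k-module L̃_6(z,y) is simple. -/

import Mathlib

/-- The defining relations of the affine Hecke algebra of type `A_2` (for `Gl_3`),
on the free algebra on four generators `T = X 0`, `T⁻¹ = X 1`, `S_1 = X 2`, `S_2 = X 3`. -/
inductive HeckeRel (R : Type) [CommRing R] (q : R) :
    FreeAlgebra R (Fin 4) → FreeAlgebra R (Fin 4) → Prop
  | TTinv : HeckeRel R q (FreeAlgebra.ι R 0 * FreeAlgebra.ι R 1) 1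
  | TinvT : HeckeRel R q (FreeAlgebra.ι R 1 * FreeAlgebra.ι R 0) 1
  | quad : HeckeRel R q
      ((FreeAlgebra.ι R 2 + 1) * (FreeAlgebra.ι R 2 - algebraMap R (FreeAlgebra R (Fin 4)) q)) 0
  | T3S1 : HeckeRel R q (FreeAlgebra.ι R 0 ^ 3 * FreeAlgebra.ι R 2)
      (FreeAlgebra.ι R 2 * FreeAlgebra.ι R 0 ^ 3)
  | braid : HeckeRel R q (FreeAlgebra.ι R 2 * FreeAlgebra.ι R 3 * FreeAlgebra.ι R 2)
      (FreeAlgebra.ι R 3 * FreeAlgebra.ι R 2 * FreeAlgebra.ι R 3)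
  | TS2 : HeckeRel R q (FreeAlgebra.ι R 0 * FreeAlgebra.ι R 3)
      (FreeAlgebra.ι R 2 * FreeAlgebra.ι R 0)

/-- The affine Hecke algebra `H_R` with parameter `q ∈ R`. -/
abbrev HeckeAlg (R : Type) [CommRing R] (q : R) := RingQuot (HeckeRel R q)

namespace HeckeAlg

variable (R : Type) [CommRing R] (q : R)

noncomputable def gen (i : Fin 4) : HeckeAlg R q :=
  RingQuot.mkAlgHom R (HeckeRel R q) (FreeAlgebra.ι R i)

noncomputable def T : HeckeAlg R q := gen R q 0
noncomputable def Tinv : HeckeAlg R q := gen R q 1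
noncomputable def S1 : HeckeAlg R q := gen R q 2
noncomputable def S2 : HeckeAlg R q := gen R q 3

theorem T_mul_Tinv : T R q * Tinv R q = 1 := by
  simpa [T, Tinv, gen, map_mul, map_one] using
    RingQuot.mkAlgHom_rel R (HeckeRel.TTinv (R := R) (q := q))

theorem Tinv_mul_T : Tinv R q * T R q = 1 := by
  simpa [T, Tinv, gen, map_mul, map_one] using
    RingQuot.mkAlgHom_rel R (HeckeRel.TinvT (R := R) (q := q))

theorem quad_rel : (S1 R q + 1) * (S1 R q - algebraMap R (HeckeAlg R q) q) = 0 := by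
  simpa [S1, gen, map_mul, map_add, map_sub, map_one, map_zero, AlgHom.commutes] using
    RingQuot.mkAlgHom_rel R (HeckeRel.quad (R := R) (q := q))

theorem T3_mul_S1 : T R q ^ 3 * S1 R q = S1 R q * T R q ^ 3 := by
  simpa [T, S1, gen, map_mul, map_pow] using
    RingQuot.mkAlgHom_rel R (HeckeRel.T3S1 (R := R) (q := q))

theorem braid_rel : S1 R q * S2 R q * S1 R q = S2 R q * S1 R q * S2 R q := by
  simpa [S1, S2, gen, map_mul] using
    RingQuot.mkAlgHom_rel R (HeckeRel.braid (R := R) (q := q))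

theorem T_mul_S2 : T R q * S2 R q = S1 R q * T R q := by
  simpa [T, S1, S2, gen, map_mul] using
    RingQuot.mkAlgHom_rel R (HeckeRel.TS2 (R := R) (q := q))

/-- The canonical (base change) ring homomorphism `H_R → H_S` induced by a ring
homomorphism `R → S` sending the parameter `q` to the parameter `q'`. -/
noncomputable def map {R S : Type} [CommRing R] [CommRing S] (f : R →+* S) (q : R) (q' : S)
    (h : f q = q') : HeckeAlg R q →+* HeckeAlg S q' := by
  subst h
  letI : Algebra R (HeckeAlg S (f q)) :=
    RingHom.toAlgebra' ((algebraMap S (HeckeAlg S (f q))).comp f)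
      (fun c x => by simpa using Algebra.commutes (f c) x)
  refine RingQuot.lift
    ⟨((FreeAlgebra.lift R fun i => gen S (f q) i : _ →ₐ[R] HeckeAlg S (f q)) :
        FreeAlgebra R (Fin 4) →+* HeckeAlg S (f q)), ?_⟩
  have key : ∀ i : Fin 4,
      (FreeAlgebra.lift R fun j => gen S (f q) j) (FreeAlgebra.ι R i) = gen S (f q) i :=
    fun i => FreeAlgebra.lift_ι_apply _ _
  have keyq : (FreeAlgebra.lift R fun j => gen S (f q) j)
      (algebraMap R (FreeAlgebra R (Fin 4)) q) = algebraMap S (HeckeAlg S (f q)) (f q) := by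
    rw [AlgHom.commutes]
    rfl
  intro a b hab
  cases hab with
  | TTinv => simpa [key, T, Tinv] using T_mul_Tinv S (f q)
  | TinvT => simpa [key, T, Tinv] using Tinv_mul_T S (f q)
  | quad => simpa [key, keyq, S1] using quad_rel S (f q)
  | T3S1 => simpa [key, T, S1] using T3_mul_S1 S (f q)
  | braid => simpa [key, S1, S2] using braid_rel S (f q)
  | TS2 => simpa [key, T, S1, S2] using T_mul_S2 S (f q)

/-- `S_1⁻¹ = q⁻¹ (S_1 - q + 1)`, where `qi` is an inverse of `q` in `R`. -/
noncomputable def S1i (qi : R) : HeckeAlg R q :=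
  algebraMap R (HeckeAlg R q) qi * (S1 R q - algebraMap R (HeckeAlg R q) q + 1)

/-- `S_2⁻¹ = q⁻¹ (S_2 - q + 1)`, where `qi` is an inverse of `q` in `R`. -/
noncomputable def S2i (qi : R) : HeckeAlg R q :=
  algebraMap R (HeckeAlg R q) qi * (S2 R q - algebraMap R (HeckeAlg R q) q + 1)

/-- The Bernstein elements `Y_1 = q S_1⁻¹ S_2⁻¹ T`, `Y_2 = S_2⁻¹ T S_1`,
`Y_3 = q⁻¹ T S_1 S_2`, where `qi` is an inverse of `q` in `R`. -/
noncomputable def Y (qi : R) : Fin 3 → HeckeAlg R q :=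
  ![algebraMap R (HeckeAlg R q) q * S1i R q qi * S2i R q qi * T R q,
    S2i R q qi * T R q * S1 R q,
    algebraMap R (HeckeAlg R q) qi * T R q * S1 R q * S2 R q]

end HeckeAlg

noncomputable section

variable (p : ℕ) [Fact p.Prime] (k : Type) [Field k] [IsAlgClosed k] [CharP k p]

/-- `H_k = H ⊗_{ℤ[q]} k` with `q ↦ 0`. -/
abbrev Hk : Type := HeckeAlg k 0

/-- The action of `T` on a `1`-dimensional space: multiplication by `c`. -/
def Tmat1 (c : k) : Module.End k (Fin 1 → k) := Matrix.mulVecLin !![c]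

/-- The action of `T` on the `2`-dimensional space with basis `w, Tw` where
`T(Tw) = -y²w - yTw`. -/
def Tmat2 (y : k) : Module.End k (Fin 2 → k) := Matrix.mulVecLin !![0, -y^2; 1, -y]

/-- The action of `T` on the `3`-dimensional space with basis `v, Tv, T²v` where
`T(T²v) = zv`. -/
def Tmat3 (z : k) : Module.End k (Fin 3 → k) := Matrix.mulVecLin !![0, 0, z; 1, 0, 0; 0, 1, 0]

/-- The action of `T` on the `6`-dimensional space with basis `v, Tv, T²v, w, Tw, T²w`
where `T(T²v) = zv`, `T(T²w) = zw`. -/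
def Tmat6 (z : k) : Module.End k (Fin 6 → k) := Matrix.mulVecLin
  !![0, 0, z, 0, 0, 0;
     1, 0, 0, 0, 0, 0;
     0, 1, 0, 0, 0, 0;
     0, 0, 0, 0, 0, z;
     0, 0, 0, 1, 0, 0;
     0, 0, 0, 0, 1, 0]

/-- The action of `S_1` on `L_6(z,y)`: `S_1v = 0`, `S_1(Tv) = T²w`, `S_1(T²v) = -T²v`,
`S_1w = -w`, `S_1(Tw) = (y/z)T²v`, `S_1(T²w) = -T²w`. -/
def SL6 (z y : k) : Module.End k (Fin 6 → k) := Matrix.mulVecLin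
  !![0, 0, 0,  0,  0,     0;
     0, 0, 0,  0,  0,     0;
     0, 0, -1, 0,  y / z, 0;
     0, 0, 0,  -1, 0,     0;
     0, 0, 0,  0,  0,     0;
     0, 1, 0,  0,  0,     -1]

/-- The action of `S_1` on `L̃_6(z,y)`: as on `L_6(z,y)` except `S_1v = w`, `S_1(Tv) = 0`. -/
def SLt6 (z y : k) : Module.End k (Fin 6 → k) := Matrix.mulVecLin
  !![0, 0, 0,  0,  0,     0;
     0, 0, 0,  0,  0,     0;
     0, 0, -1, 0,  y / z, 0;
     1, 0, 0,  -1, 0,     0;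
     0, 0, 0,  0,  0,     0;
     0, 0, 0,  0,  0,     -1]

/-- The action of `S_1` on `K_6(z,y,y')`: `S_1v = w`, `S_1(Tv) = (y/y')T²w`,
`S_1(T²v) = -T²v`, `S_1w = -w`, `S_1(Tw) = (y'/z)T²v`, `S_1(T²w) = -T²w`. -/
def SK6 (z y y' : k) : Module.End k (Fin 6 → k) := Matrix.mulVecLin
  !![0, 0,      0,  0,  0,      0;
     0, 0,      0,  0,  0,      0;
     0, 0,      -1, 0,  y' / z, 0;
     1, 0,      0,  -1, 0,      0;
     0, 0,      0,  0,  0,      0;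
     0, y / y', 0,  0,  0,      -1]

/-- The action of `S_1` on `M_3(z,y)`: `S_1v = 0`, `S_1(Tv) = y⁻¹T²v`, `S_1(T²v) = -T²v`. -/
def SM3 (y : k) : Module.End k (Fin 3 → k) := Matrix.mulVecLin
  !![0, 0, 0; 0, 0, 0; 0, y⁻¹, -1]

/-- The action of `S_1` on `M̃_3(z,y)`: `S_1v = -v`, `S_1(Tv) = -y⁻¹T²v`, `S_1(T²v) = -T²v`. -/
def SMt3 (y : k) : Module.End k (Fin 3 → k) := Matrix.mulVecLin
  !![-1, 0, 0; 0, 0, 0; 0, -y⁻¹, -1]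

/-- The action of `S_1` on `N_3(z,y)`: `S_1v = -v`, `S_1(Tv) = 0`, `S_1(T²v) = -yTv - T²v`. -/
def SN3 (y : k) : Module.End k (Fin 3 → k) := Matrix.mulVecLin
  !![-1, 0, 0; 0, 0, -y; 0, 0, -1]

/-- The action of `S_1` on `Ñ_3(z,y)`: `S_1v = 0`, `S_1(Tv) = 0`, `S_1(T²v) = yTv - T²v`. -/
def SNt3 (y : k) : Module.End k (Fin 3 → k) := Matrix.mulVecLin
  !![0, 0, 0; 0, 0, y; 0, 0, -1]

/-- The action of `S_1` on `P_3(z)`: `S_1v = 0`, `S_1(Tv) = 0`, `S_1(T²v) = -T²v`. -/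
def SP3 : Module.End k (Fin 3 → k) := Matrix.mulVecLin
  !![0, 0, 0; 0, 0, 0; 0, 0, -1]

/-- The action of `S_1` on `P̃_3(z)`: `S_1v = -v`, `S_1(Tv) = 0`, `S_1(T²v) = -T²v`. -/
def SPt3 : Module.End k (Fin 3 → k) := Matrix.mulVecLin
  !![-1, 0, 0; 0, 0, 0; 0, 0, -1]

/-- The action of `S_1` on `M_2(y)`: `S_1w = -w`, `S_1(Tw) = 0`. -/
def SM2 : Module.End k (Fin 2 → k) := Matrix.mulVecLin !![-1, 0; 0, 0]

/-- The action of `S_1` on `M̃_2(y)`: `S_1w = 0`, `S_1(Tw) = -Tw`. -/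
def SMt2 : Module.End k (Fin 2 → k) := Matrix.mulVecLin !![0, 0; 0, -1]

end

/-!
Since `T³ = z` is a scalar, the relations of `H_k` reduce to short identities between explicit
operators once `S_2 = T⁻¹ S_1 T` is written out.

For simplicity, the image of `S_1` is spanned by `w, T²w, T²v`, and there `S_1 T²` is a single
nilpotent Jordan chain `w ↦ -T²w`, `T²w ↦ y T²v`, `T²v ↦ 0`. No nonzero vector is killed by all of
`S_1, S_1 T, S_1 T²`, so a nonzero submodule meets this image and, going down the chain, contains
`T²v`. This vector generates the module, because `T(T²v) = z v` and `S_1 v = w`.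
-/

namespace HeckeAlg

variable {R : Type} [CommRing R] {q : R} {A : Type*} [Ring A] [Algebra R A] {t : Aˣ} {s₁ s₂ : A}

/-- The defining relations of `HeckeAlg R q`, imposed on elements `t, s₁, s₂` of an `R`-algebra that
are to be the images of `T, S_1, S_2`. The two relations between `T` and `T⁻¹` are encoded by taking
`t` to be a unit. -/
structure Relations (q : R) (t : Aˣ) (s₁ s₂ : A) : Prop where
  quad : (s₁ + 1) * (s₁ - algebraMap R A q) = 0
  pow_three_comm : (t : A) ^ 3 * s₁ = s₁ * (t : A) ^ 3
  braid : s₁ * s₂ * s₁ = s₂ * s₁ * s₂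
  intertwine : (t : A) * s₂ = s₁ * t

theorem Relations.freeAlgebra_lift_eq (h : Relations q t s₁ s₂) ⦃a b : FreeAlgebra R (Fin 4)⦄
    (hab : HeckeRel R q a b) :
    FreeAlgebra.lift R ![(t : A), ↑t⁻¹, s₁, s₂] a =
      FreeAlgebra.lift R ![(t : A), ↑t⁻¹, s₁, s₂] b := by
  cases hab with
  | TTinv => simp
  | TinvT => simp
  | quad => simpa using h.quad
  | T3S1 => simpa using h.pow_three_comm
  | braid => simpa using h.braid
  | TS2 => simpa using h.intertwine

/-- The universal property of `HeckeAlg R q`: the algebra homomorphism sending `T, S_1, S_2` to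
elements `t, s₁, s₂` that satisfy the defining relations. -/
noncomputable def lift (h : Relations q t s₁ s₂) : HeckeAlg R q →ₐ[R] A :=
  RingQuot.liftAlgHom R ⟨FreeAlgebra.lift R ![(t : A), ↑t⁻¹, s₁, s₂], h.freeAlgebra_lift_eq⟩

theorem lift_T (h : Relations q t s₁ s₂) : lift h (T R q) = t := by
  simp [lift, T, gen]

theorem lift_S1 (h : Relations q t s₁ s₂) : lift h (S1 R q) = s₁ := by
  simp [lift, S1, gen]

end HeckeAlg

section Lt6

variable {k : Type} [Field k]

theorem Tmat6_apply (z : k) (x : Fin 6 → k) :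
    Tmat6 k z x = ![z * x 2, x 0, x 1, z * x 5, x 3, x 4] := by
  ext i
  fin_cases i <;> simp [Tmat6, Matrix.mulVec, dotProduct, Fin.sum_univ_six]

theorem SLt6_apply (z y : k) (x : Fin 6 → k) :
    SLt6 k z y x = ![0, 0, -x 2 + y / z * x 4, x 0 - x 3, 0, -x 5] := by
  ext i
  fin_cases i <;> simp [SLt6, Matrix.mulVec, dotProduct, Fin.sum_univ_six, sub_eq_add_neg]

/-- The action of `S_2 = T⁻¹ S_1 T` on `L̃_6(z,y)`: `S_2v = 0`, `S_2(Tv) = -Tv`, `S_2(T²v) = T²w`,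
`S_2w = (y/z)Tv`, `S_2(Tw) = -Tw`, `S_2(T²w) = -T²w`. Writing out its matrix avoids conjugating
by `T`. -/
def S2Lt6 (z y : k) : Module.End k (Fin 6 → k) := Matrix.mulVecLin
  !![0, 0,  0, 0,     0,  0;
     0, -1, 0, y / z, 0,  0;
     0, 0,  0, 0,     0,  0;
     0, 0,  0, 0,     0,  0;
     0, 0,  0, 0,     -1, 0;
     0, 0,  1, 0,     0,  -1]

theorem S2Lt6_apply (z y : k) (x : Fin 6 → k) :
    S2Lt6 z y x = ![0, -x 1 + y / z * x 3, 0, 0, -x 4, x 2 - x 5] := by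
  ext i
  fin_cases i <;> simp [S2Lt6, Matrix.mulVec, dotProduct, Fin.sum_univ_six, sub_eq_add_neg]

theorem Tmat6_pow_three (z : k) : Tmat6 k z ^ 3 = algebraMap k _ z := by
  ext x i
  fin_cases i <;> simp [pow_succ, Tmat6_apply]

/-- The action of `T` as an invertible operator, with inverse `z⁻¹T²` because `T³ = z`. -/
def Tmat6Unit (z : kˣ) : (Module.End k (Fin 6 → k))ˣ where
  val := Tmat6 k z
  inv := (↑z⁻¹ : k) • Tmat6 k z ^ 2
  val_inv := by
    rw [mul_smul_comm, ← pow_succ', Tmat6_pow_three, Algebra.algebraMap_eq_smul_one, smul_smul,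
      z.inv_mul, one_smul]
  inv_val := by
    rw [smul_mul_assoc, ← pow_succ, Tmat6_pow_three, Algebra.algebraMap_eq_smul_one, smul_smul,
      z.inv_mul, one_smul]

theorem SLt6_add_one_mul_self (z y : k) : (SLt6 k z y + 1) * SLt6 k z y = 0 := by
  refine LinearMap.ext fun x => ?_
  simp [SLt6_apply]

theorem Tmat6_mul_S2Lt6 (z y : k) : Tmat6 k z * S2Lt6 z y = SLt6 k z y * Tmat6 k z := by
  refine LinearMap.ext fun x => ?_
  simp [Tmat6_apply, SLt6_apply, S2Lt6_apply, mul_sub]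

theorem SLt6_mul_S2Lt6_mul_SLt6_apply (z y : k) (x : Fin 6 → k) :
    (SLt6 k z y * S2Lt6 z y * SLt6 k z y) x = ![0, 0, 0, 0, 0, x 2 - y / z * x 4 - x 5] := by
  have hcoord : -x 5 + (-(y / z * x 4) + x 2) = x 2 - y / z * x 4 - x 5 := by ring
  simpa [SLt6_apply, S2Lt6_apply] using hcoord

theorem S2Lt6_mul_SLt6_mul_S2Lt6_apply (z y : k) (x : Fin 6 → k) :
    (S2Lt6 z y * SLt6 k z y * S2Lt6 z y) x = ![0, 0, 0, 0, 0, x 2 - y / z * x 4 - x 5] := by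
  have hcoord : -(y / z * x 4) - (x 5 - x 2) = x 2 - y / z * x 4 - x 5 := by ring
  simpa [SLt6_apply, S2Lt6_apply] using hcoord

theorem Lt6_relations (z : kˣ) (y : k) :
    HeckeAlg.Relations (0 : k) (Tmat6Unit z) (SLt6 k z y) (S2Lt6 z y) where
  quad := by rw [map_zero, sub_zero, SLt6_add_one_mul_self]
  pow_three_comm := by
    change Tmat6 k z ^ 3 * _ = _ * Tmat6 k z ^ 3
    rw [Tmat6_pow_three, Algebra.commutes]
  braid := LinearMap.ext fun x => by
    rw [SLt6_mul_S2Lt6_mul_SLt6_apply, S2Lt6_mul_SLt6_mul_S2Lt6_apply]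
  intertwine := Tmat6_mul_S2Lt6 (z : k) y

/-- The `H_k`-module `L̃_6(z,y)`, as a representation on coordinates with respect to the basis
`v, Tv, T²v, w, Tw, T²w`. -/
noncomputable def Lt6 (z : kˣ) (y : k) : Hk k →ₐ[k] Module.End k (Fin 6 → k) :=
  HeckeAlg.lift (Lt6_relations z y)

theorem Lt6_T (z : kˣ) (y : k) : Lt6 z y (HeckeAlg.T k 0) = Tmat6 k z :=
  HeckeAlg.lift_T _

theorem Lt6_S1 (z : kˣ) (y : k) : Lt6 z y (HeckeAlg.S1 k 0) = SLt6 k z y :=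
  HeckeAlg.lift_S1 _

theorem exists_SLt6_Tmat6_pow_apply_ne_zero (z y : k) {x : Fin 6 → k} (hx : x ≠ 0) :
    ∃ n : ℕ, SLt6 k z y ((Tmat6 k z ^ n) x) ≠ 0 := by
  contrapose! hx
  obtain ⟨h₂, h₀, hx₅⟩ : -x 2 + y / z * x 4 = 0 ∧ x 0 - x 3 = 0 ∧ x 5 = 0 := by
    simpa [SLt6_apply] using hx 0
  obtain ⟨h₁, -, hx₄⟩ : -x 1 + y / z * x 3 = 0 ∧ z * x 2 - z * x 5 = 0 ∧ x 4 = 0 := by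
    simpa [Tmat6_apply, SLt6_apply] using hx 1
  obtain ⟨-, -, hx₃⟩ : -x 0 + y / z * (z * x 5) = 0 ∧ z * x 1 - z * x 4 = 0 ∧ x 3 = 0 := by
    simpa [pow_two, Tmat6_apply, SLt6_apply] using hx 2
  have hx₀ : x 0 = 0 := by linear_combination h₀ + hx₃
  have hx₁ : x 1 = 0 := by linear_combination -h₁ + y / z * hx₃
  have hx₂ : x 2 = 0 := by linear_combination -h₂ + y / z * hx₄
  ext i
  fin_cases i <;> assumption

theorem SLt6_Tmat6_Tmat6_apply {z : k} (hz : z ≠ 0) (y a b c : k) :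
    SLt6 k z y (Tmat6 k z (Tmat6 k z ![0, 0, a, b, 0, c])) = ![0, 0, y * c, 0, 0, -b] := by
  have hcancel : y / z * (z * c) = y * c := by field_simp
  simpa [Tmat6_apply, SLt6_apply] using hcancel

variable {z y : k} {W : Submodule k (Fin 6 → k)}

theorem T2v_mem_of_ne_zero_of_mem (hz : z ≠ 0) (hy : y ≠ 0)
    (hT : W ∈ (Tmat6 k z).invtSubmodule) (hS : W ∈ (SLt6 k z y).invtSubmodule) {a b c : k}
    (hne : ![0, 0, a, b, 0, c] ≠ 0) (hmem : ![0, 0, a, b, 0, c] ∈ W) :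
    ![0, 0, 1, 0, 0, 0] ∈ W := by
  have of_multiple {d : k} (hd : d ≠ 0) (h : ![0, 0, d, 0, 0, 0] ∈ W) :
      ![0, 0, 1, 0, 0, 0] ∈ W := by
    rw [← W.smul_mem_iff hd]
    simpa using h
  have chain {a b c : k} (h : ![0, 0, a, b, 0, c] ∈ W) : ![0, 0, y * c, 0, 0, -b] ∈ W := by
    simpa only [Submodule.mem_comap, SLt6_Tmat6_Tmat6_apply hz] using hS (hT (hT h))
  obtain rfl | hb := eq_or_ne b 0
  · obtain rfl | hc := eq_or_ne c 0
    · exact of_multiple (fun ha => hne (by simp [ha])) hmem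
    · exact of_multiple (mul_ne_zero hy hc) (by simpa using chain hmem)
  · exact of_multiple (mul_ne_zero hy (neg_ne_zero.2 hb)) (by simpa using chain (chain hmem))

theorem eq_top_of_T2v_mem (hz : z ≠ 0)
    (hT : W ∈ (Tmat6 k z).invtSubmodule) (hS : W ∈ (SLt6 k z y).invtSubmodule)
    (hT2v : ![0, 0, 1, 0, 0, 0] ∈ W) : W = ⊤ := by
  have hv : ![1, 0, 0, 0, 0, 0] ∈ W := by
    rw [← W.smul_mem_iff hz]
    simpa [Tmat6_apply] using hT hT2v
  have hTv : ![0, 1, 0, 0, 0, 0] ∈ W := by simpa [Tmat6_apply] using hT hv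
  have hw : ![0, 0, 0, 1, 0, 0] ∈ W := by simpa [SLt6_apply] using hS hv
  have hTw : ![0, 0, 0, 0, 1, 0] ∈ W := by simpa [Tmat6_apply] using hT hw
  have hT2w : ![0, 0, 0, 0, 0, 1] ∈ W := by simpa [Tmat6_apply] using hT hTw
  refine W.eq_top_iff'.2 fun x => ?_
  have hx : x = x 0 • ![1, 0, 0, 0, 0, 0] + x 1 • ![0, 1, 0, 0, 0, 0] +
      x 2 • ![0, 0, 1, 0, 0, 0] + x 3 • ![0, 0, 0, 1, 0, 0] +
      x 4 • ![0, 0, 0, 0, 1, 0] + x 5 • ![0, 0, 0, 0, 0, 1] := by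
    ext i
    fin_cases i <;> simp
  rw [hx]
  apply_rules [add_mem, W.smul_mem]

theorem eq_bot_or_eq_top_of_mem_invtSubmodule (hz : z ≠ 0) (hy : y ≠ 0)
    (hT : W ∈ (Tmat6 k z).invtSubmodule) (hS : W ∈ (SLt6 k z y).invtSubmodule) :
    W = ⊥ ∨ W = ⊤ := by
  refine or_iff_not_imp_left.2 fun hW => ?_
  obtain ⟨x, hxW, hx⟩ := W.ne_bot_iff.1 hW
  obtain ⟨n, hne⟩ := exists_SLt6_Tmat6_pow_apply_ne_zero z y hx
  have hmem : SLt6 k z y ((Tmat6 k z ^ n) x) ∈ W :=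
    hS (Module.End.pow_apply_mem_of_forall_mem n hT x hxW)
  rw [SLt6_apply] at hne hmem
  exact eq_top_of_T2v_mem hz hT hS (T2v_mem_of_ne_zero_of_mem hz hy hT hS hne hmem)

end Lt6

theorem statement10_general (k : Type) [Field k] (z y : kˣ) :
    ∃ ρ : Hk k →ₐ[k] Module.End k (Fin 6 → k),
      ρ (HeckeAlg.T k 0) = Tmat6 k z ∧ ρ (HeckeAlg.S1 k 0) = SLt6 k z y ∧
      (∀ W : Submodule k (Fin 6 → k), (∀ a : Hk k, ∀ x ∈ W, ρ a x ∈ W) → W = ⊥ ∨ W = ⊤) := by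
  refine ⟨Lt6 z y, Lt6_T z y, Lt6_S1 z y, fun W hW => ?_⟩
  have hT : W ∈ (Tmat6 k (z : k)).invtSubmodule := Lt6_T z (y : k) ▸ hW (HeckeAlg.T k 0)
  have hS : W ∈ (SLt6 k (z : k) y).invtSubmodule := Lt6_S1 z (y : k) ▸ hW (HeckeAlg.S1 k 0)
  exact eq_bot_or_eq_top_of_mem_invtSubmodule z.ne_zero y.ne_zero hT hS

/-- For `z, y ∈ k^×`, the formulas defining `L̃_6(z,y)` satisfy the defining relations of `H_k`, so they endow the `6`-dimensional `k`-vector space with an `H_k`-module structure, and the `H_k`-module `L̃_6(z,y)` is simple. -/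
theorem statement10 (p : ℕ) [Fact p.Prime] (k : Type) [Field k] [IsAlgClosed k] [CharP k p]
    (z y : kˣ) :
    ∃ ρ : Hk k →ₐ[k] Module.End k (Fin 6 → k),
      ρ (HeckeAlg.T k 0) = Tmat6 k z ∧ ρ (HeckeAlg.S1 k 0) = SLt6 k z y ∧
      (∀ W : Submodule k (Fin 6 → k), (∀ a : Hk k, ∀ x ∈ W, ρ a x ∈ W) → W = ⊥ ∨ W = ⊤) :=
  statement10_general k z y
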